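/- Let G be a finite group and let C ⊆ G be a union of conjugacy classes of G. Then every eigenvalue of the Cayley digraph Cay(G,C) is an integer if and only if C is power-closed. -/

import Mathlib

/-- A subset `C` of a group is power-closed if for every `x ∈ C` and every `y` in the cyclic
subgroup generated by `x` with `⟨y⟩ = ⟨x⟩`, we have `y ∈ C`. -/
def IsPowerClosed {G : Type*} [Group G] (C : Finset G) : Prop :=
  ∀ x ∈ C, ∀ y : G, y ∈ Subgroup.zpowers x → Subgroup.zpowers y = Subgroup.zpowers x → y ∈ C

/-- The adjacency matrix of the Cayley digraph `Cay(G, C)`: there is an arc `(g, h)` iff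
`g * h⁻¹ ∈ C`. -/
def cayleyAdj {G : Type*} [Group G] [Fintype G] [DecidableEq G] (C : Finset G) :
    Matrix G G ℂ := fun g h => if g * h⁻¹ ∈ C then 1 else 0

/-! The adjacency matrix of `Cay(G, C)` is the matrix of `∑ c ∈ C, ρ c` for the left regular
representation `ρ`. For any representation of a group of order `n` and a primitive `n`-th root of
unity `ζ`, the trace of `∑ c ∈ C, ρ (c ^ k)` is `P (ζ ^ k)` with `P ∈ ℤ[X]` independent of `k`, so
for `k` coprime to `n` passing from `c` to `c ^ k` acts on traces as the Galois automorphism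
`ζ ↦ ζ ^ k`; hence a trace is an integer if and only if it does not depend on such `k`.

Traces control eigenvalues because these sums are central: their eigenspaces are
subrepresentations. If the sum does not depend on `k`, then an eigenvalue times its multiplicity is
an integral trace, and the eigenvalue, being an algebraic integer, is an integer. If the sum for
`k = 1` has integer eigenvalues, then on each eigenspace of the difference of the sums for `k` and
`1` both traces agree, so the difference has no nonzero eigenvalue; by complete reducibility it
vanishes. In the regular representation this says that `c ↦ c ^ k` maps `C` to itself. -/

open Module Polynomial

section PowerClosed

variable {G : Type*} [Group G] [Finite G]

lemma zpowers_eq_zpowers_iff_exists_coprime_pow {x y : G} :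
    Subgroup.zpowers y = Subgroup.zpowers x ↔ ∃ k : ℕ, k.Coprime (Nat.card G) ∧ x ^ k = y := by
  constructor
  · intro h
    obtain ⟨j, rfl⟩ : y ∈ Submonoid.powers x :=
      mem_powers_iff_mem_zpowers.2 (h ▸ Subgroup.mem_zpowers y)
    have horder : orderOf (x ^ j) = orderOf x := by
      rw [← Nat.card_zpowers, ← Nat.card_zpowers, h]
    have hj : j.Coprime (orderOf x) := by
      rw [orderOf_pow, Nat.div_eq_self] at horder
      exact Nat.coprime_comm.1 (horder.resolve_left (orderOf_pos x).ne')
    have : NeZero (Nat.card G) := ⟨Nat.card_pos.ne'⟩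
    obtain ⟨u, hu⟩ := ZMod.unitsMap_surjective (orderOf_dvd_natCard x) (ZMod.unitOfCoprime j hj)
    refine ⟨(u : ZMod (Nat.card G)).val, ZMod.val_coe_unit_coprime u, ?_⟩
    rw [pow_eq_pow_iff_modEq, ← ZMod.natCast_eq_natCast_iff, ZMod.natCast_val,
      ← ZMod.unitsMap_val (orderOf_dvd_natCard x), hu, ZMod.coe_unitOfCoprime]
  · rintro ⟨k, hk, rfl⟩
    refine le_antisymm (Subgroup.zpowers_le.2 (Subgroup.npow_mem_zpowers x k)) ?_
    obtain ⟨m, hm⟩ :=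
      exists_pow_eq_self_of_coprime (hk.coprime_dvd_right (orderOf_dvd_natCard x))
    exact Subgroup.zpowers_le.2 ⟨m, by simpa using hm⟩

lemma isPowerClosed_iff_forall_coprime_pow_mem {C : Finset G} :
    IsPowerClosed C ↔ ∀ k : ℕ, k.Coprime (Nat.card G) → ∀ x ∈ C, x ^ k ∈ C := by
  constructor
  · intro h k hk x hx
    exact h x hx _ (Subgroup.npow_mem_zpowers x k)
      (zpowers_eq_zpowers_iff_exists_coprime_pow.2 ⟨k, hk, rfl⟩)
  · intro h x hx y _ hxy
    obtain ⟨k, hk, rfl⟩ := zpowers_eq_zpowers_iff_exists_coprime_pow.1 hxy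
    exact h k hk x hx

end PowerClosed

section PrimitiveRoot

variable {K : Type*} [Field K] {n : ℕ} {ζ : K}

lemma aeval_pow_eq_intCast_of_coprime [CharZero K] (hn : 0 < n) (hζ : IsPrimitiveRoot ζ n)
    {k : ℕ} (hk : k.Coprime n) {P : ℤ[X]} {m : ℤ} (h : aeval ζ P = m) : aeval (ζ ^ k) P = m := by
  have hroot : aeval ζ (P - C m) = 0 := by simp [h]
  have hdvd : minpoly ℤ (ζ ^ k) ∣ P - C m :=
    hζ.minpoly_eq_pow_coprime hk ▸ minpoly.isIntegrallyClosed_dvd (hζ.isIntegral hn) hroot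
  simpa [sub_eq_zero] using aeval_eq_zero_of_dvd_aeval_eq_zero hdvd (minpoly.aeval ℤ (ζ ^ k))

lemma exists_eq_intCast_of_forall_aeval_pow_eq (hn : 0 < n) (hζ : IsPrimitiveRoot ζ n) {P : ℤ[X]}
    {c : K} (h : ∀ k : ℕ, k.Coprime n → aeval (ζ ^ k) P = c) : ∃ z : ℤ, c = z := by
  -- `P - c` vanishes at all roots of the cyclotomic polynomial, so `c` is the remainder of `P`
  -- modulo it, and that remainder has integer coefficients.
  have : NeZero n := ⟨hn.ne'⟩
  have hroot (ξ : K) (hξ : ξ ∈ primitiveRoots n K) :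
      (P.map (Int.castRingHom K) - C c).IsRoot ξ := by
    obtain ⟨k, -, hk, rfl⟩ := hζ.isPrimitiveRoot_iff.1 ((mem_primitiveRoots hn).1 hξ)
    simpa [eval_map, aeval_def, sub_eq_zero] using h k hk
  have hdvd : cyclotomic n K ∣ P.map (Int.castRingHom K) - C c := by
    rw [cyclotomic_eq_prod_X_sub_primitiveRoots hζ]
    exact Finset.prod_dvd_of_coprime
      (fun a _ b _ hab ↦ pairwise_coprime_X_sub_C Function.injective_id hab)
      fun ξ hξ ↦ dvd_iff_isRoot.2 (hroot ξ hξ)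
  have hmod : (P %ₘ cyclotomic n ℤ).map (Int.castRingHom K) = C c := by
    rw [map_modByMonic _ (cyclotomic.monic n ℤ), map_cyclotomic]
    rw [← sub_eq_zero, ← (modByMonic_eq_self_iff (cyclotomic.monic n K)).2
      (degree_C_le.trans_lt (degree_cyclotomic_pos n K hn) : (C c).degree < _), ← sub_modByMonic]
    exact (modByMonic_eq_zero_iff_dvd (cyclotomic.monic n K)).2 hdvd
  exact ⟨(P %ₘ cyclotomic n ℤ).coeff 0, by simpa using congr_arg (coeff · 0) hmod.symm⟩

end PrimitiveRoot

section LinearAlgebra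

variable {K V : Type*} [Field K] [AddCommGroup V] [Module K V]

lemma isIntegral_of_hasEigenvalue {f : End K V} (hf : IsIntegral ℤ f) {μ : K}
    (hμ : f.HasEigenvalue μ) : IsIntegral ℤ μ := by
  obtain ⟨p, hp, hpf⟩ := hf
  obtain ⟨v, hv⟩ := hμ.exists_hasEigenvector
  refine ⟨p, hp, ?_⟩
  have h : aeval f (p.map (algebraMap ℤ K)) v = 0 := by
    rw [aeval_map_algebraMap, aeval_def, hpf, LinearMap.zero_apply]
  rw [End.aeval_apply_of_hasEigenvector hv, eval_map] at h
  exact (smul_eq_zero.1 h).resolve_right hv.2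

variable [FiniteDimensional K V]

lemma natCast_finrank_eigenspace_ne_zero [CharZero K] {f : End K V} {μ : K}
    (hμ : f.HasEigenvalue μ) : (finrank K (f.eigenspace μ) : K) ≠ 0 :=
  Nat.cast_ne_zero.2 (Submodule.finrank_eq_zero.not.2 hμ)

variable [IsAlgClosed K]

lemma exists_trace_eq_intCast_of_forall_hasEigenvalue {f : End K V}
    (hf : ∀ μ, f.HasEigenvalue μ → ∃ z : ℤ, μ = z) :
    ∃ z : ℤ, LinearMap.trace K V f = z := by
  rw [End.trace_eq_sum_roots_charpoly_of_splits (IsAlgClosed.splits f.charpoly)]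
  have hroots : ∀ μ ∈ f.charpoly.roots, μ ∈ (Int.castRingHom K).range := fun μ hμ ↦ by
    obtain ⟨z, rfl⟩ :=
      hf μ ((End.hasEigenvalue_iff_isRoot_charpoly f μ).2 (isRoot_of_mem_roots hμ))
    exact ⟨z, rfl⟩
  obtain ⟨z, hz⟩ := Subring.multiset_sum_mem _ _ hroots
  exact ⟨z, hz.symm⟩

lemma trace_pow_eq_sum_eigenvalues {f : End K V} (hf : f.IsSemisimple) (k : ℕ) :
    LinearMap.trace K V (f ^ k) =
      ∑ μ ∈ f.finite_hasEigenvalue.toFinset, finrank K (f.eigenspace μ) * μ ^ k := by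
  classical
  have hinternal := DirectSum.isInternal_submodule_of_iSupIndep_of_iSup_eq_top
    f.eigenspaces_iSupIndep hf.iSup_eigenspace_eq_top
  have hmaps (μ : K) : Set.MapsTo (f ^ k) (f.eigenspace μ) (f.eigenspace μ) :=
    End.mapsTo_genEigenspace_of_comm (Commute.self_pow f k) μ 1
  rw [LinearMap.trace_eq_sum_trace_restrict' hinternal f.finite_hasEigenvalue hmaps]
  refine Finset.sum_congr rfl fun μ _ ↦ ?_
  have hscalar : (f ^ k).restrict (hmaps μ) = μ ^ k • LinearMap.id := by
    ext v
    change (f ^ k) v = μ ^ k • (v : V)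
    simpa using End.aeval_apply_of_mem_apply_eq_smul (p := X ^ k) (End.mem_eigenspace_iff.1 v.2)
  rw [hscalar, map_smul, LinearMap.trace_id, smul_eq_mul, mul_comm]

lemma exists_intPolynomial_trace_pow_eq_aeval {n : ℕ} (hn : 0 < n) {ζ : K}
    (hζ : IsPrimitiveRoot ζ n) {f : End K V} (hf : f ^ n = 1) :
    ∃ P : ℤ[X], ∀ k : ℕ, LinearMap.trace K V (f ^ k) = aeval (ζ ^ k) P := by
  have : NeZero n := ⟨hn.ne'⟩
  have hsemisimple : f.IsSemisimple :=
    End.isSemisimple_of_squarefree_aeval_eq_zero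
      (X_pow_sub_one_separable_iff.2 hζ.neZero'.out).squarefree (by simp [hf])
  have hpow : ∀ μ ∈ f.finite_hasEigenvalue.toFinset, ∃ i : ℕ, ζ ^ i = μ := fun μ hμ ↦ by
    obtain ⟨v, hv⟩ := (f.finite_hasEigenvalue.mem_toFinset.1 hμ).exists_hasEigenvector
    have hμn : μ ^ n = 1 := by
      have h := End.aeval_apply_of_hasEigenvector (p := X ^ n - 1) hv
      simpa [hf, sub_eq_zero, hv.2] using h.symm
    obtain ⟨i, -, hi⟩ := hζ.eq_pow_of_pow_eq_one hμn
    exact ⟨i, hi⟩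
  choose! i hi using hpow
  refine ⟨∑ μ ∈ f.finite_hasEigenvalue.toFinset,
    (finrank K (f.eigenspace μ) : ℤ[X]) * X ^ i μ, fun k ↦ ?_⟩
  rw [trace_pow_eq_sum_eigenvalues hsemisimple, map_sum]
  refine Finset.sum_congr rfl fun μ hμ ↦ ?_
  simp only [map_mul, map_natCast, map_pow, aeval_X, pow_right_comm ζ k, hi μ hμ]

end LinearAlgebra

section Eigen

variable {K V : Type*} [CommRing K] [AddCommGroup V] [Module K V]

lemma hasEigenvector_of_restrict {f : End K V} {p : Submodule K V} (hp : ∀ v ∈ p, f v ∈ p)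
    {μ : K} {v : p} (hv : End.HasEigenvector (f.restrict hp) μ v) : f.HasEigenvector μ v :=
  ⟨End.mem_eigenspace_iff.2 (congr_arg Subtype.val hv.apply_eq_smul),
    fun h ↦ hv.2 (Subtype.ext h)⟩

/-- The eigenspace of an endomorphism commuting with the action of `G`, as a
subrepresentation, so that traces can be computed on it. -/
def eigenSubrepresentation {G : Type*} [Monoid G] {ρ : Representation K G V} {f : End K V}
    (hf : ∀ g, Commute f (ρ g)) (μ : K) : Subrepresentation ρ where
  toSubmodule := f.eigenspace μ
  apply_mem_toSubmodule g := End.mapsTo_genEigenspace_of_comm (hf g) μ 1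

end Eigen

lemma eq_zero_of_forall_hasEigenvalue_eq_zero {K G V : Type*} [Field K] [IsAlgClosed K] [Monoid G]
    [AddCommGroup V] [Module K V] [FiniteDimensional K V] {ρ : Representation K G V}
    [ρ.IsSemisimpleRepresentation] {f : End K V} (hcomm : ∀ g, Commute f (ρ g))
    (hmaps : ∀ σ : Subrepresentation ρ, ∀ v ∈ σ.toSubmodule, f v ∈ σ.toSubmodule)
    (hf : ∀ μ, f.HasEigenvalue μ → μ = 0) : f = 0 := by
  obtain ⟨σ, hσ⟩ := exists_isCompl (eigenSubrepresentation hcomm 0)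
  have hσ_bot : σ = ⊥ := by
    by_contra hne
    have : Nontrivial σ.toSubmodule :=
      Submodule.nontrivial_iff_ne_bot.2 fun h ↦ hne (Subrepresentation.toSubmodule_injective h)
    obtain ⟨μ, hμ⟩ := End.exists_eigenvalue (f.restrict (hmaps σ))
    obtain ⟨v, hv⟩ := hμ.exists_hasEigenvector
    have hfv : f.HasEigenvector μ v := hasEigenvector_of_restrict (hmaps σ) hv
    obtain rfl := hf μ (End.hasEigenvalue_of_hasEigenvector hfv)
    have hmem : (v : V) ∈ eigenSubrepresentation hcomm 0 ⊓ σ := ⟨hfv.1, v.2⟩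
    rw [hσ.inf_eq_bot] at hmem
    exact hfv.2 hmem
  have htop : eigenSubrepresentation hcomm 0 = ⊤ := eq_top_of_isCompl_bot (hσ_bot ▸ hσ)
  have hker : f.eigenspace 0 = ⊤ := congr_arg Subrepresentation.toSubmodule htop
  rwa [End.eigenspace_zero, LinearMap.ker_eq_top] at hker

section PowSum

variable {K V : Type*} [CommRing K] [AddCommGroup V] [Module K V]

section Monoid

variable {G : Type*} [Monoid G]

/-- The endomorphism `∑ c ∈ C, ρ (c ^ k)`: the image under `ρ` of the `k`-th power operation
applied to the element `∑ c ∈ C, c` of the group algebra. -/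
def powSum (ρ : Representation K G V) (C : Finset G) (k : ℕ) : End K V :=
  ∑ c ∈ C, ρ (c ^ k)

variable {ρ : Representation K G V} {C : Finset G}

lemma powSum_apply_mem (σ : Subrepresentation ρ) (k : ℕ) {v : V} (hv : v ∈ σ.toSubmodule) :
    powSum ρ C k v ∈ σ.toSubmodule := by
  rw [powSum, LinearMap.sum_apply]
  exact Submodule.sum_mem _ fun c _ ↦ σ.apply_mem_toSubmodule _ hv

lemma powSum_toRepresentation (σ : Subrepresentation ρ) (k : ℕ) :
    powSum σ.toRepresentation C k =
      (powSum ρ C k).restrict fun _ ↦ powSum_apply_mem σ k := by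
  ext v
  simp [powSum, LinearMap.sum_apply, Subrepresentation.toRepresentation]

lemma isIntegral_powSum [Finite G] (k : ℕ) : IsIntegral ℤ (powSum ρ C k) := by
  have h : powSum ρ C k =
      MonoidAlgebra.lift ℤ (End K V) G ρ (∑ c ∈ C, MonoidAlgebra.single (c ^ k) 1) := by
    simp [powSum]
  rw [h]
  exact (IsIntegral.of_finite ℤ _).map _

end Monoid

variable {G : Type*} [Group G] {ρ : Representation K G V} {C : Finset G}

lemma commute_powSum (hC : ∀ g ∈ C, ∀ h : G, h * g * h⁻¹ ∈ C) (k : ℕ) (g : G) :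
    Commute (powSum ρ C k) (ρ g) := by
  simp only [Commute, SemiconjBy, powSum, Finset.sum_mul, Finset.mul_sum, ← map_mul]
  refine Finset.sum_nbij' (g⁻¹ * · * g) (g * · * g⁻¹) (fun c hc ↦ ?_) (fun c hc ↦ hC c hc g)
    (fun c _ ↦ by group) (fun c _ ↦ by group) fun c _ ↦ ?_
  · simpa using hC c hc g⁻¹
  · have hconj : (g⁻¹ * c * g) ^ k = g⁻¹ * c ^ k * g := by simpa using conj_pow (a := g⁻¹)
    rw [hconj, mul_assoc, mul_inv_cancel_left]

lemma powSum_eq_powSum_one_of_isPowerClosed [Finite G] (hC : IsPowerClosed C) {k : ℕ}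
    (hk : k.Coprime (Nat.card G)) : powSum ρ C k = powSum ρ C 1 := by
  have hinj : Function.Injective (· ^ k : G → G) := (Nat.Coprime.pow_left_bijective hk.symm).1
  have hmaps : Set.MapsTo (· ^ k) (C : Set G) C :=
    isPowerClosed_iff_forall_coprime_pow_mem.1 hC k hk
  exact Finset.sum_nbij (· ^ k) hmaps hinj.injOn
    (Finset.surjOn_of_injOn_of_card_le _ hmaps hinj.injOn le_rfl) fun c _ ↦ by rw [pow_one]

end PowSum

section Trace

variable {K G V : Type*} [Field K] [IsAlgClosed K] [CharZero K] [Group G] [Finite G]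
  [AddCommGroup V] [Module K V] [FiniteDimensional K V] {ρ : Representation K G V} {C : Finset G}

lemma exists_isPrimitiveRoot_trace_powSum_eq_aeval (ρ : Representation K G V) (C : Finset G) :
    ∃ ζ : K, IsPrimitiveRoot ζ (Nat.card G) ∧
      ∃ P : ℤ[X], ∀ k : ℕ, LinearMap.trace K V (powSum ρ C k) = aeval (ζ ^ k) P := by
  have : NeZero (Nat.card G) := ⟨Nat.card_pos.ne'⟩
  obtain ⟨ζ, hζ⟩ := HasEnoughRootsOfUnity.exists_primitiveRoot K (Nat.card G)
  have hpow (c : G) : ρ c ^ Nat.card G = 1 := by rw [← map_pow, pow_card_eq_one', map_one]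
  choose P hP using fun c ↦ exists_intPolynomial_trace_pow_eq_aeval Nat.card_pos hζ (hpow c)
  exact ⟨ζ, hζ, ∑ c ∈ C, P c, fun k ↦ by simp only [powSum, map_pow, map_sum, hP]⟩

lemma trace_powSum_eq_intCast {m : ℤ} (h : LinearMap.trace K V (powSum ρ C 1) = m) {k : ℕ}
    (hk : k.Coprime (Nat.card G)) : LinearMap.trace K V (powSum ρ C k) = m := by
  obtain ⟨ζ, hζ, P, hP⟩ := exists_isPrimitiveRoot_trace_powSum_eq_aeval ρ C
  rw [hP k]
  rw [hP 1, pow_one] at h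
  exact aeval_pow_eq_intCast_of_coprime Nat.card_pos hζ hk h

lemma exists_trace_powSum_eq_intCast
    (h : ∀ k : ℕ, k.Coprime (Nat.card G) → powSum ρ C k = powSum ρ C 1) :
    ∃ z : ℤ, LinearMap.trace K V (powSum ρ C 1) = z := by
  obtain ⟨ζ, hζ, P, hP⟩ := exists_isPrimitiveRoot_trace_powSum_eq_aeval ρ C
  exact exists_eq_intCast_of_forall_aeval_pow_eq Nat.card_pos hζ fun k hk ↦ by rw [← hP, h k hk]

lemma exists_eq_intCast_of_hasEigenvalue_powSum (hC : ∀ g ∈ C, ∀ h : G, h * g * h⁻¹ ∈ C)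
    (h : ∀ k : ℕ, k.Coprime (Nat.card G) → powSum ρ C k = powSum ρ C 1) {μ : K}
    (hμ : (powSum ρ C 1).HasEigenvalue μ) : ∃ z : ℤ, μ = z := by
  let σ := eigenSubrepresentation (commute_powSum (ρ := ρ) hC 1) μ
  have hpowSum (k : ℕ) (hk : k.Coprime (Nat.card G)) :
      powSum σ.toRepresentation C k = powSum σ.toRepresentation C 1 := by
    simp only [powSum_toRepresentation, h k hk]
  have hscalar : powSum σ.toRepresentation C 1 = μ • LinearMap.id :=
    (powSum_toRepresentation σ 1).trans (End.restrict_eigenspace _ μ)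
  obtain ⟨m, hm⟩ := exists_trace_powSum_eq_intCast hpowSum
  rw [hscalar, map_smul, LinearMap.trace_id, smul_eq_mul] at hm
  have hdim : (finrank K σ.toSubmodule : K) ≠ 0 := natCast_finrank_eigenspace_ne_zero hμ
  refine (IsIntegral.exists_int_iff_exists_rat
    (isIntegral_of_hasEigenvalue (isIntegral_powSum 1) hμ)).1 ⟨m / finrank K σ.toSubmodule, ?_⟩
  push_cast
  exact eq_div_of_mul_eq hdim hm

lemma powSum_eq_powSum_one_of_forall_hasEigenvalue (hC : ∀ g ∈ C, ∀ h : G, h * g * h⁻¹ ∈ C)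
    (h : ∀ μ, (powSum ρ C 1).HasEigenvalue μ → ∃ z : ℤ, μ = z) {k : ℕ}
    (hk : k.Coprime (Nat.card G)) : powSum ρ C k = powSum ρ C 1 := by
  have hcomm (g : G) : Commute (powSum ρ C k - powSum ρ C 1) (ρ g) :=
    (commute_powSum hC k g).sub_left (commute_powSum hC 1 g)
  rw [← sub_eq_zero]
  refine eq_zero_of_forall_hasEigenvalue_eq_zero hcomm (fun σ v hv ↦
    sub_mem (powSum_apply_mem σ k hv) (powSum_apply_mem σ 1 hv)) fun μ hμ ↦ ?_
  let σ := eigenSubrepresentation hcomm μ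
  have heigen (ν : K) (hν : (powSum σ.toRepresentation C 1).HasEigenvalue ν) :
      ∃ z : ℤ, ν = z := by
    obtain ⟨v, hv⟩ := hν.exists_hasEigenvector
    rw [powSum_toRepresentation] at hv
    exact h ν (End.hasEigenvalue_of_hasEigenvector (hasEigenvector_of_restrict _ hv))
  have hscalar :
      powSum σ.toRepresentation C k - powSum σ.toRepresentation C 1 = μ • LinearMap.id := by
    rw [powSum_toRepresentation, powSum_toRepresentation]
    exact (LinearMap.restrict_sub _ _).trans (End.restrict_eigenspace _ μ)
  obtain ⟨m, hm⟩ := exists_trace_eq_intCast_of_forall_hasEigenvalue heigen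
  have htrace := congr_arg (LinearMap.trace K σ.toSubmodule) hscalar
  rw [map_sub, trace_powSum_eq_intCast hm hk, hm, sub_self, map_smul, LinearMap.trace_id,
    smul_eq_mul, eq_comm] at htrace
  exact (mul_eq_zero.1 htrace).resolve_right (natCast_finrank_eigenspace_ne_zero hμ)

end Trace

section LeftRegular

open Representation

variable {G : Type*} [Group G] {C : Finset G}

lemma coeff_powSum_leftRegular {K : Type*} [CommRing K] [DecidableEq G] (k : ℕ) (g h : G) :
    (powSum (leftRegular K G) C k (MonoidAlgebra.single h 1)).coeff g =
      (C.filter (· ^ k = g * h⁻¹)).card := by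
  simp only [powSum, LinearMap.sum_apply, ofMulAction_single, MonoidAlgebra.coeff_sum,
    Finsupp.finsetSum_apply, MonoidAlgebra.coeff_single, Finsupp.single_apply, smul_eq_mul,
    eq_mul_inv_iff_mul_eq, Finset.sum_boole]

lemma toMatrix_powSum_leftRegular [Fintype G] [DecidableEq G] :
    LinearMap.toMatrix (MonoidAlgebra.basis G ℂ) (MonoidAlgebra.basis G ℂ)
      (powSum (leftRegular ℂ G) C 1) = cayleyAdj C := by
  ext g h
  rw [LinearMap.toMatrix_apply, MonoidAlgebra.basis_apply, cayleyAdj]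
  refine (coeff_powSum_leftRegular 1 g h).trans ?_
  simp only [pow_one, Finset.filter_eq']
  split_ifs <;> simp

lemma isPowerClosed_of_powSum_leftRegular_eq [Finite G] {K : Type*} [CommRing K] [CharZero K]
    (h : ∀ k : ℕ, k.Coprime (Nat.card G) →
      powSum (leftRegular K G) C k = powSum (leftRegular K G) C 1) : IsPowerClosed C := by
  classical
  refine isPowerClosed_iff_forall_coprime_pow_mem.2 fun k hk x hx ↦ ?_
  have hcard : (C.filter (· ^ k = x ^ k)).card = (C.filter (· ^ 1 = x ^ k)).card := by
    have hcoeff := congr_arg (fun f ↦ (f (MonoidAlgebra.single 1 1)).coeff (x ^ k)) (h k hk)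
    simpa only [coeff_powSum_leftRegular, inv_one, mul_one, Nat.cast_inj] using hcoeff
  obtain ⟨c, hc⟩ : (C.filter (· ^ 1 = x ^ k)).Nonempty := by
    rw [← Finset.card_pos, ← hcard, Finset.card_pos]
    exact ⟨x, Finset.mem_filter.2 ⟨hx, rfl⟩⟩
  rw [Finset.mem_filter, pow_one] at hc
  exact hc.2 ▸ hc.1

end LeftRegular

/-- Theorem 1: for `C` a union of conjugacy classes, all eigenvalues of `Cay(G, C)` are
integers iff `C` is power-closed. -/
theorem stmt0 {G : Type*} [Group G] [Fintype G] [DecidableEq G] (C : Finset G)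
    (hC : ∀ g ∈ C, ∀ h : G, h * g * h⁻¹ ∈ C) :
    (∀ μ ∈ spectrum ℂ (cayleyAdj C), ∃ k : ℤ, μ = (k : ℂ)) ↔ IsPowerClosed C := by
  rw [← toMatrix_powSum_leftRegular, LinearMap.spectrum_toMatrix]
  simp only [← End.hasEigenvalue_iff_mem_spectrum]
  constructor
  · intro h
    exact isPowerClosed_of_powSum_leftRegular_eq fun k hk ↦
      powSum_eq_powSum_one_of_forall_hasEigenvalue hC h hk
  · intro h μ hμ
    exact exists_eq_intCast_of_hasEigenvalue_powSum hC
      (fun k hk ↦ powSum_eq_powSum_one_of_isPowerClosed h hk) hμ
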